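/- Let F : ℝᵖ → ℝ be twice continuously differentiable, let x* ∈ ℝᵖ satisfy ∇F(x*) = 0 with ∇²F(x*) positive definite, let 0 ≤ γ < 1, and let (γ_t) be a sequence with 0 ≤ γ_t ≤ γ and γ_t → 0. Let (x^t) satisfy x^{t+1} = x^t − v^t with ‖∇²F(x^t)v^t − ∇F(x^t)‖ ≤ γ_t‖∇F(x^t)‖ for all t. Then there exists δ > 0 such that whenever ‖x⁰ − x*‖ ≤ δ, the sequence (x^t) converges to x* superlinearly: x^t → x* and for every ρ > 0 there exists T such that ‖∇²F(x*)(x^{t+1} − x*)‖ ≤ ρ‖∇²F(x*)(x^t − x*)‖ for all t ≥ T. -/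

import Mathlib

open RealInnerProductSpace Filter

/-!
Put `A = ∇²F(x*)` and measure errors by `‖A (x - x*)‖`. Near `x*` both the variation of the Hessian
and the first-order Taylor error of the gradient are small relative to `A`, so one inexact Newton
step with forcing term `g` multiplies the error by at most `g + ε (1 + g)`, with `ε` as small as we
like. Since the forcing terms vanish, these factors are eventually below some `q < 1`, so their
partial products are bounded and tend to `0`: a sufficiently good starting point keeps all iterates
in the neighbourhood where the one-step bound holds, and the errors tend to `0`. Once they do, the
one-step bound with arbitrary `ε` is superlinear convergence.
-/

open scoped NNReal Topology
open Asymptotics Finset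

section Sequences

variable {c : ℕ → ℝ} {q : ℝ}

theorem tendsto_prod_range_zero_of_eventually_le (hc₀ : ∀ t, 0 ≤ c t) (hq : q < 1)
    (hc : ∀ᶠ t in atTop, c t ≤ q) : Tendsto (fun t ↦ ∏ s ∈ range t, c s) atTop (𝓝 0) := by
  refine (summable_of_ratio_norm_eventually_le hq ?_).tendsto_atTop_zero
  filter_upwards [hc] with t ht
  rw [prod_range_succ, norm_mul, mul_comm, Real.norm_of_nonneg (hc₀ t)]
  gcongr

theorem exists_pos_forall_tendsto_zero_of_le_mul (hc₀ : ∀ t, 0 ≤ c t) (hq : q < 1)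
    (hc : ∀ᶠ t in atTop, c t ≤ q) {r : ℝ} (hr : 0 < r) :
    ∃ δ > 0, ∀ u : ℕ → ℝ, (∀ t, 0 ≤ u t) → (∀ t, u t ≤ r → u (t + 1) ≤ c t * u t) →
      u 0 ≤ δ → Tendsto u atTop (𝓝 0) := by
  have hprod := tendsto_prod_range_zero_of_eventually_le hc₀ hq hc
  obtain ⟨B, hB⟩ := hprod.bddAbove_range
  replace hB (t : ℕ) : ∏ s ∈ range t, c s ≤ B := hB (Set.mem_range_self t)
  have hB₀ : 0 < B := zero_lt_one.trans_le (by simpa using hB 0)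
  refine ⟨r / B, by positivity, fun u hu₀ hu huδ ↦ ?_⟩
  have hle (t : ℕ) : u t ≤ (∏ s ∈ range t, c s) * u 0 := by
    induction t with
    | zero => simp
    | succ t ih =>
      have hur : u t ≤ r := calc
        u t ≤ (∏ s ∈ range t, c s) * u 0 := ih
        _ ≤ B * (r / B) := mul_le_mul (hB t) huδ (hu₀ 0) hB₀.le
        _ = r := mul_div_cancel₀ r hB₀.ne'
      calc
        u (t + 1) ≤ c t * u t := hu t hur
        _ ≤ c t * ((∏ s ∈ range t, c s) * u 0) := mul_le_mul_of_nonneg_left ih (hc₀ t)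
        _ = (∏ s ∈ range (t + 1), c s) * u 0 := by rw [prod_range_succ]; ring
  exact squeeze_zero hu₀ hle (by simpa using hprod.mul_const (u 0))

end Sequences

section InexactNewton

variable {𝕜 E F : Type*} [NontriviallyNormedField 𝕜] [NormedAddCommGroup E] [NormedSpace 𝕜 E]
  [NormedAddCommGroup F] [NormedSpace 𝕜 F]

/-- The sequence `x` is produced by an inexact Newton method for the equation `G = 0`, with
(approximate) Jacobian `G'` and forcing terms `γ`. The step `v^t` is encoded as
`x t - x (t + 1)`. -/
def IsInexactNewtonSeq (G : E → F) (G' : E → E →L[𝕜] F) (γ : ℕ → ℝ) (x : ℕ → E) : Prop :=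
  ∀ t, ‖G' (x t) (x t - x (t + 1)) - G (x t)‖ ≤ γ t * ‖G (x t)‖

theorem one_sub_mul_norm_map_le_of_residual_le {A J : E →L[𝕜] F} {κ g : ℝ} (hg : 0 ≤ g)
    (hJ : ∀ z, ‖(J - A) z‖ ≤ κ * ‖A z‖) {d e : E} {b : F} (hb : ‖b - A d‖ ≤ κ * ‖A d‖)
    (hres : ‖J (d - e) - b‖ ≤ g * ‖b‖) :
    (1 - κ) * ‖A e‖ ≤ (2 * κ + g * (1 + κ)) * ‖A d‖ := by
  have hdecomp : A e = (J - A) d - (b - A d) - (J (d - e) - b) - (J - A) e := by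
    simp only [sub_apply, map_sub]
    abel
  have htri : ‖A e‖ ≤ ‖(J - A) d‖ + ‖b - A d‖ + ‖J (d - e) - b‖ + ‖(J - A) e‖ := by
    conv_lhs => rw [hdecomp]
    exact norm_sub_le_of_le (norm_sub_le_of_le (norm_sub_le _ _) le_rfl) le_rfl
  have hbnorm : ‖b‖ ≤ (1 + κ) * ‖A d‖ := by
    linarith [norm_le_norm_add_norm_sub' b (A d)]
  have hres' : ‖J (d - e) - b‖ ≤ g * ((1 + κ) * ‖A d‖) := hres.trans (by gcongr)
  linarith [hJ d, hJ e]

variable {G : E → F} {G' : E → E →L[𝕜] F} {γ : ℕ → ℝ} {xs : E} {K : ℝ≥0}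

theorem nhds_eq_comap_norm_map_sub {A : E →L[𝕜] F} (hA : AntilipschitzWith K A) (a : E) :
    𝓝 a = comap (fun x ↦ ‖A (x - a)‖) (𝓝 0) := by
  rw [(hA.isInducing A.continuous).nhds_eq_comap, ← nhds_comap_dist, comap_comap]
  simp only [Function.comp_def, dist_eq_norm, map_sub]

theorem eventually_forall_norm_sub_apply_le (hA : AntilipschitzWith K (G' xs))
    (hG' : ContinuousAt G' xs) {κ : ℝ} (hκ : 0 < κ) :
    ∀ᶠ x in 𝓝 xs, ∀ z, ‖(G' x - G' xs) z‖ ≤ κ * ‖G' xs z‖ := by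
  have hlim : Tendsto (fun x ↦ ‖G' x - G' xs‖ * K) (𝓝 xs) (𝓝 0) := by
    simpa using (tendsto_iff_norm_sub_tendsto_zero.1 hG').mul_const (K : ℝ)
  filter_upwards [hlim.eventually_le_const hκ] with x hx z
  calc
    ‖(G' x - G' xs) z‖ ≤ ‖G' x - G' xs‖ * ‖z‖ := ContinuousLinearMap.le_opNorm _ z
    _ ≤ ‖G' x - G' xs‖ * (K * ‖G' xs z‖) := by
      gcongr
      exact (G' xs).bound_of_antilipschitz hA z
    _ = ‖G' x - G' xs‖ * K * ‖G' xs z‖ := (mul_assoc _ _ _).symm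
    _ ≤ κ * ‖G' xs z‖ := by gcongr

theorem eventually_norm_sub_sub_map_sub_le {A : E →L[𝕜] F} (hA : AntilipschitzWith K A)
    (hG : HasFDerivAt G A xs) {κ : ℝ} (hκ : 0 < κ) :
    ∀ᶠ x in 𝓝 xs, ‖G x - G xs - A (x - xs)‖ ≤ κ * ‖A (x - xs)‖ := by
  have hO : (fun x ↦ x - xs) =O[𝓝 xs] fun x ↦ A (x - xs) :=
    .of_bound K (.of_forall fun x ↦ A.bound_of_antilipschitz hA (x - xs))
  exact (hG.isLittleO.trans_isBigO hO).def hκ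

theorem eventually_forall_norm_map_sub_le (hA : AntilipschitzWith K (G' xs))
    (hG : HasFDerivAt G (G' xs) xs) (hG' : ContinuousAt G' xs) (hroot : G xs = 0)
    {ε : ℝ} (hε : 0 < ε) :
    ∀ᶠ x in 𝓝 xs, ∀ y g, 0 ≤ g → ‖G' x (x - y) - G x‖ ≤ g * ‖G x‖ →
      ‖G' xs (y - xs)‖ ≤ (g + ε * (1 + g)) * ‖G' xs (x - xs)‖ := by
  -- `κ` solves `2 * κ + g * (1 + κ) = (1 - κ) * (g + ε * (1 + g))` for every `g`.
  obtain ⟨κ, hκ₀, hκ₁, hκ⟩ : ∃ κ : ℝ, 0 < κ ∧ κ < 1 ∧ κ * (2 + ε) = ε :=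
    ⟨ε / (2 + ε), by positivity, (div_lt_one (by positivity)).2 (by linarith), by field_simp⟩
  filter_upwards [eventually_forall_norm_sub_apply_le hA hG' hκ₀,
    eventually_norm_sub_sub_map_sub_le hA hG hκ₀] with x hJ hb y g hg hres
  rw [hroot, sub_zero] at hb
  rw [← sub_sub_sub_cancel_right x y xs] at hres
  refine le_of_mul_le_mul_left ?_ (sub_pos.2 hκ₁)
  calc
    (1 - κ) * ‖G' xs (y - xs)‖ ≤ (2 * κ + g * (1 + κ)) * ‖G' xs (x - xs)‖ :=
      one_sub_mul_norm_map_le_of_residual_le hg hJ hb hres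
    _ = (1 - κ) * ((g + ε * (1 + g)) * ‖G' xs (x - xs)‖) := by
      linear_combination (1 + g) * ‖G' xs (x - xs)‖ * hκ

theorem IsInexactNewtonSeq.abs {x : ℕ → E} (hx : IsInexactNewtonSeq G G' γ x) :
    IsInexactNewtonSeq G G' (fun t ↦ |γ t|) x :=
  fun t ↦ (hx t).trans (by gcongr; exact le_abs_self _)

theorem IsInexactNewtonSeq.eventually_tendsto (hA : AntilipschitzWith K (G' xs))
    (hG : HasFDerivAt G (G' xs) xs) (hG' : ContinuousAt G' xs) (hroot : G xs = 0)
    {q : ℝ} (hq : q < 1) (hγ : ∀ᶠ t in atTop, |γ t| ≤ q) :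
    ∀ᶠ x₀ in 𝓝 xs, ∀ x, IsInexactNewtonSeq G G' γ x → x 0 = x₀ → Tendsto x atTop (𝓝 xs) := by
  obtain ⟨ε, hε, hεq⟩ : ∃ ε > 0, q + ε * (1 + q) < 1 :=
    ⟨(1 - q) / 4, by linarith, by nlinarith⟩
  have hnhds := nhds_eq_comap_norm_map_sub hA xs
  have hbasis := hnhds ▸ Metric.nhds_basis_closedBall.comap fun x ↦ ‖G' xs (x - xs)‖
  obtain ⟨r, hr, hstep⟩ := hbasis.eventually_iff.1
    (eventually_forall_norm_map_sub_le hA hG hG' hroot hε)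
  have hc : ∀ᶠ t in atTop, |γ t| + ε * (1 + |γ t|) ≤ q + ε * (1 + q) := by
    filter_upwards [hγ] with t ht
    gcongr
  obtain ⟨δ, hδ, hconv⟩ := exists_pos_forall_tendsto_zero_of_le_mul
    (fun t ↦ by positivity) hεq hc hr
  filter_upwards [hbasis.mem_of_mem hδ] with x₀ hx₀ x hx h₀
  rw [hnhds, tendsto_comap_iff]
  refine hconv _ (fun t ↦ norm_nonneg _) (fun t ht ↦ ?_) ?_
  · exact hstep (by simpa using ht) _ _ (abs_nonneg _) (hx.abs t)
  · simpa [h₀] using hx₀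

theorem IsInexactNewtonSeq.isLittleO (hA : AntilipschitzWith K (G' xs))
    (hG : HasFDerivAt G (G' xs) xs) (hG' : ContinuousAt G' xs) (hroot : G xs = 0)
    (hγ : Tendsto γ atTop (𝓝 0)) {x : ℕ → E} (hx : IsInexactNewtonSeq G G' γ x)
    (hlim : Tendsto x atTop (𝓝 xs)) :
    (fun t ↦ G' xs (x (t + 1) - xs)) =o[atTop] fun t ↦ G' xs (x t - xs) := by
  refine isLittleO_iff.2 fun ρ hρ ↦ ?_
  have hfactor : Tendsto (fun t ↦ |γ t| + ρ / 2 * (1 + |γ t|)) atTop (𝓝 (ρ / 2)) := by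
    simpa using hγ.abs.add ((hγ.abs.const_add 1).const_mul (ρ / 2))
  filter_upwards [hfactor.eventually_le_const (half_lt_self hρ),
    hlim.eventually (eventually_forall_norm_map_sub_le hA hG hG' hroot (half_pos hρ))]
    with t ht hstep
  calc
    ‖G' xs (x (t + 1) - xs)‖ ≤ (|γ t| + ρ / 2 * (1 + |γ t|)) * ‖G' xs (x t - xs)‖ :=
      hstep _ _ (abs_nonneg _) (hx.abs t)
    _ ≤ ρ * ‖G' xs (x t - xs)‖ := by gcongr

theorem inexact_newton_superlinear_convergence_general (hA : AntilipschitzWith K (G' xs))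
    (hG : HasFDerivAt G (G' xs) xs) (hG' : ContinuousAt G' xs) (hroot : G xs = 0)
    (hγ : Tendsto γ atTop (𝓝 0)) :
    ∃ δ > (0 : ℝ), ∀ x : ℕ → E, IsInexactNewtonSeq G G' γ x → ‖x 0 - xs‖ ≤ δ →
      Tendsto x atTop (𝓝 xs) ∧ ∀ ρ > (0 : ℝ), ∃ T : ℕ, ∀ t ≥ T,
        ‖G' xs (x (t + 1) - xs)‖ ≤ ρ * ‖G' xs (x t - xs)‖ := by
  have hγ_half : ∀ᶠ t in atTop, |γ t| ≤ 1 / 2 :=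
    hγ.abs.eventually_le_const (by norm_num)
  obtain ⟨δ, hδ, hconv⟩ := Metric.nhds_basis_closedBall.eventually_iff.1
    (IsInexactNewtonSeq.eventually_tendsto hA hG hG' hroot one_half_lt_one hγ_half)
  refine ⟨δ, hδ, fun x hx h₀ ↦ ?_⟩
  have hlim := hconv (mem_closedBall_iff_norm.2 h₀) x hx rfl
  have hsuper := hx.isLittleO hA hG hG' hroot hγ hlim
  exact ⟨hlim, fun ρ hρ ↦ eventually_atTop.1 (hsuper.def hρ)⟩

end InexactNewton

section Gradient

theorem contDiff_gradient {E : Type*} [NormedAddCommGroup E] [InnerProductSpace ℝ E]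
    [CompleteSpace E] {f : E → ℝ} {m n : WithTop ℕ∞} (hf : ContDiff ℝ n f) (hmn : m + 1 ≤ n) :
    ContDiff ℝ m (gradient f) :=
  (InnerProductSpace.toDual ℝ E).symm.contDiff.comp (hf.fderiv_right hmn)

theorem exists_antilipschitzWith_of_inner_ne_zero {𝕜 E : Type*} [RCLike 𝕜] [NormedAddCommGroup E]
    [InnerProductSpace 𝕜 E] [FiniteDimensional 𝕜 E] {A : E →L[𝕜] E}
    (hA : ∀ y, y ≠ 0 → inner 𝕜 y (A y) ≠ 0) : ∃ K : ℝ≥0, AntilipschitzWith K A := by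
  have hker : LinearMap.ker (A : E →ₗ[𝕜] E) = ⊥ := LinearMap.ker_eq_bot'.2 fun y hy ↦ by
    by_contra hne
    exact hA y hne (by rw [show A y = 0 from hy, inner_zero_right])
  obtain ⟨K, -, hK⟩ := LinearMap.exists_antilipschitzWith _ hker
  exact ⟨K, hK⟩

end Gradient

/-- superlinear convergence of inexact Newton with vanishing forcing terms.
If `F` is twice continuously differentiable, `∇F(x*) = 0` with positive definite Hessian
at `x*`, `0 ≤ γ_t ≤ γ < 1` and `γ_t → 0`, then there is `δ > 0` such that any iterates
`x^{t+1} = x^t - v^t` with `‖∇²F(x^t)v^t - ∇F(x^t)‖ ≤ γ_t‖∇F(x^t)‖`, started with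
`‖x⁰ - x*‖ ≤ δ`, converge to `x*` superlinearly. -/
theorem inexact_newton_superlinear_convergence {p : ℕ}
    (F : EuclideanSpace ℝ (Fin p) → ℝ) (xs : EuclideanSpace ℝ (Fin p)) (γ : ℝ)
    (hF : ContDiff ℝ 2 F) (hcrit : gradient F xs = 0)
    (hpos : ∀ y : EuclideanSpace ℝ (Fin p), y ≠ 0 →
      0 < ⟪y, fderiv ℝ (gradient F) xs y⟫)
    (hγ0 : 0 ≤ γ) (hγ1 : γ < 1)
    (γseq : ℕ → ℝ) (hγseq : ∀ t, 0 ≤ γseq t ∧ γseq t ≤ γ)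
    (hγlim : Tendsto γseq atTop (nhds 0)) :
    ∃ δ > (0 : ℝ), ∀ x : ℕ → EuclideanSpace ℝ (Fin p),
      (∀ t, ‖fderiv ℝ (gradient F) (x t) (x t - x (t + 1)) - gradient F (x t)‖ ≤
        γseq t * ‖gradient F (x t)‖) →
      ‖x 0 - xs‖ ≤ δ →
      Tendsto x atTop (nhds xs) ∧
        ∀ ρ > (0 : ℝ), ∃ T : ℕ, ∀ t ≥ T,
          ‖fderiv ℝ (gradient F) xs (x (t + 1) - xs)‖ ≤
            ρ * ‖fderiv ℝ (gradient F) xs (x t - xs)‖ := by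
  have hgrad : ContDiff ℝ 1 (gradient F) := contDiff_gradient hF (by norm_num)
  obtain ⟨K, hK⟩ := exists_antilipschitzWith_of_inner_ne_zero fun y hy ↦ (hpos y hy).ne'
  exact inexact_newton_superlinear_convergence_general hK
    (hgrad.differentiable one_ne_zero xs).hasFDerivAt
    (hgrad.continuous_fderiv one_ne_zero).continuousAt hcrit hγlim
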